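/- arXiv:2007.09112 — 5 statements merged into one kernel-verified Lean document; each statement's English description precedes it below -/
import Mathlib

section
/- For every 2×2 complex matrix x, 2·Tr(x²·xᵀ) − 2·Tr(x·xᵀ)·Tr(x) + Tr(x)³ − Tr(x²)·Tr(x) = 0. -/
open Matrix

/-- For every 2×2 complex matrix `x`,
`2·Tr(x²·xᵀ) − 2·Tr(x·xᵀ)·Tr(x) + Tr(x)³ − Tr(x²)·Tr(x) = 0`. -/
theorem trace_relation_two (x : Matrix (Fin 2) (Fin 2) ℂ) :
    2 * (x * x * xᵀ).trace - 2 * (x * xᵀ).trace * x.trace + x.trace ^ 3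
      - (x * x).trace * x.trace = 0 := by
  simp only [Matrix.trace_fin_two, Matrix.mul_apply, Fin.sum_univ_two, Matrix.transpose_apply]
  ring
end

section
/- The complex vector space of tuples (y₀, y₁, y₂, y₃, y₄) ∈ ℂ⁵ such that y₀·Tr(x³) + y₁·Tr(x²·xᵀ) + y₂·Tr(x²)·Tr(x) + y₃·Tr(x·xᵀ)·Tr(x) + y₄·Tr(x)³ = 0 holds for every 2×2 complex matrix x has dimension 2. -/
open Matrix

/-- The subspace of tuples `(y₀, y₁, y₂, y₃, y₄) ∈ ℂ⁵` such that
`y₀·Tr(x³) + y₁·Tr(x²·xᵀ) + y₂·Tr(x²)·Tr(x) + y₃·Tr(x·xᵀ)·Tr(x) + y₄·Tr(x)³ = 0`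
for every 2×2 complex matrix `x`. -/
noncomputable def relSpace : Submodule ℂ (Fin 5 → ℂ) where
  carrier := {y | ∀ x : Matrix (Fin 2) (Fin 2) ℂ,
    y 0 * (x * x * x).trace + y 1 * (x * x * xᵀ).trace + y 2 * ((x * x).trace * x.trace)
      + y 3 * ((x * xᵀ).trace * x.trace) + y 4 * x.trace ^ 3 = 0}
  add_mem' := by
    intro a b ha hb x
    simp only [Pi.add_apply]
    linear_combination ha x + hb x
  zero_mem' := by
    intro x
    simp
  smul_mem' := by
    intro c y hy x
    simp only [Pi.smul_apply, smul_eq_mul]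
    linear_combination c * hy x

theorem mem_relSpace_iff (y : Fin 5 → ℂ) : y ∈ relSpace ↔
    y 1 = -3 * y 0 - 2 * y 2 ∧ y 3 = 3 * y 0 + 2 * y 2 ∧ y 4 = -y 0 - y 2 := by
  constructor
  · intro h
    have h1 := h !![1, 0; 0, 0]
    have h2 := h !![1, 1; 0, 0]
    have h3 := h !![1, 0; 0, 1]
    simp only [Matrix.trace, Matrix.mul_apply, Fin.sum_univ_two, Matrix.diag_apply,
      Matrix.transpose_apply] at h1 h2 h3
    simp at h1 h2 h3
    refine ⟨?_, ?_, ?_⟩ <;> grind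
  · rintro ⟨h1, h3, h4⟩ x
    simp only [Matrix.trace, Matrix.mul_apply, Fin.sum_univ_two, Matrix.diag_apply,
      Matrix.transpose_apply, h1, h3, h4]
    ring

/-- The relation space is parametrized by the coordinates `y₀` and `y₂`. -/
noncomputable def relSpaceEquiv : relSpace ≃ₗ[ℂ] (Fin 2 → ℂ) where
  toFun y := ![y.1 0, y.1 2]
  map_add' a b := by ext i; fin_cases i <;> simp
  map_smul' c a := by ext i; fin_cases i <;> simp
  invFun z := ⟨![z 0, -3 * z 0 - 2 * z 1, z 1, 3 * z 0 + 2 * z 1, -z 0 - z 1], by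
    rw [mem_relSpace_iff]; simp⟩
  left_inv y := by
    obtain ⟨y, hy⟩ := y
    obtain ⟨h1, h3, h4⟩ := (mem_relSpace_iff y).1 hy
    ext i
    fin_cases i <;> simp [h1, h3, h4]
  right_inv z := by ext i; fin_cases i <;> simp

/-- The space of relations among the five degree-3 spanning invariants of the `O₂`
conjugation action has dimension 2. -/
theorem finrank_relSpace : Module.finrank ℂ relSpace = 2 := by
  rw [relSpaceEquiv.finrank_eq]
  simp
end

section
/- The complex vector space of functions from 2×2 complex matrices to ℂ spanned by the five functions x ↦ Tr(x³), x ↦ Tr(x²·xᵀ), x ↦ Tr(x²)·Tr(x), x ↦ Tr(x·xᵀ)·Tr(x), x ↦ Tr(x)³ has dimension 3. -/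
open Matrix

/-- The span of the five functions `x ↦ Tr(x³)`, `x ↦ Tr(x²·xᵀ)`, `x ↦ Tr(x²)·Tr(x)`,
`x ↦ Tr(x·xᵀ)·Tr(x)`, `x ↦ Tr(x)³` on 2×2 complex matrices has dimension 3. -/
theorem finrank_span_invariants :
    Module.finrank ℂ (Submodule.span ℂ
      ({(fun x => (x * x * x).trace),
        (fun x => (x * x * xᵀ).trace),
        (fun x => (x * x).trace * x.trace),
        (fun x => (x * xᵀ).trace * x.trace),
        (fun x => x.trace ^ 3)} : Set (Matrix (Fin 2) (Fin 2) ℂ → ℂ))) = 3 := by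
  have key : ∀ f1 f2 f3 f4 f5 : Matrix (Fin 2) (Fin 2) ℂ → ℂ,
      f1 = (3/2 : ℂ) • f3 + (-1/2 : ℂ) • f5 →
      f2 = f4 + (1/2 : ℂ) • f3 + (-1/2 : ℂ) • f5 →
      LinearIndependent ℂ ![f3, f4, f5] →
      Module.finrank ℂ (Submodule.span ℂ
        ({f1, f2, f3, f4, f5} : Set (Matrix (Fin 2) (Fin 2) ℂ → ℂ))) = 3 := by
    intro f1 f2 f3 f4 f5 h1 h2 hli
    have hr : Set.range ![f3, f4, f5] = {f3, f4, f5} := by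
      simp only [Matrix.range_cons, Matrix.range_empty, Set.union_empty, Set.singleton_union]
    have m3 : f3 ∈ Submodule.span ℂ ({f3, f4, f5} : Set (Matrix (Fin 2) (Fin 2) ℂ → ℂ)) :=
      Submodule.subset_span (by simp)
    have m4 : f4 ∈ Submodule.span ℂ ({f3, f4, f5} : Set (Matrix (Fin 2) (Fin 2) ℂ → ℂ)) :=
      Submodule.subset_span (by simp)
    have m5 : f5 ∈ Submodule.span ℂ ({f3, f4, f5} : Set (Matrix (Fin 2) (Fin 2) ℂ → ℂ)) :=
      Submodule.subset_span (by simp)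
    have m2 : f2 ∈ Submodule.span ℂ ({f3, f4, f5} : Set (Matrix (Fin 2) (Fin 2) ℂ → ℂ)) := by
      rw [h2]
      exact add_mem (add_mem m4 (Submodule.smul_mem _ _ m3)) (Submodule.smul_mem _ _ m5)
    have m1 : f1 ∈ Submodule.span ℂ ({f3, f4, f5} : Set (Matrix (Fin 2) (Fin 2) ℂ → ℂ)) := by
      rw [h1]
      exact add_mem (Submodule.smul_mem _ _ m3) (Submodule.smul_mem _ _ m5)
    rw [Submodule.span_insert_eq_span (Submodule.span_mono (Set.subset_insert _ _) m1),
      Submodule.span_insert_eq_span m2, ← hr, finrank_span_eq_card hli]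
    simp
  apply key
  · funext x
    simp [Matrix.trace_fin_two, Matrix.mul_apply, Fin.sum_univ_two]
    ring
  · funext x
    simp [Matrix.trace_fin_two, Matrix.mul_apply, Fin.sum_univ_two]
    ring
  · rw [Fintype.linearIndependent_iff]
    intro g hg
    have e1 := congrFun hg !![1, 0; 0, 0]
    have e2 := congrFun hg !![1, 0; 0, 1]
    have e3 := congrFun hg !![1, 1; 0, 0]
    simp [Fin.sum_univ_three, Matrix.trace_fin_two, Matrix.mul_apply, Fin.sum_univ_two] at e1 e2 e3
    norm_num at e1 e2 e3
    have h1 : g 1 = 0 := by linear_combination e3 - e1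
    have h2 : g 2 = 0 := by linear_combination (e2 - 4 * e1) / 4
    have h0 : g 0 = 0 := by linear_combination e1 - h1 - h2
    intro i
    fin_cases i
    · exact h0
    · exact h1
    · exact h2
end

section
/- The three functions from 2×2 complex matrices to ℂ given by x ↦ Tr(x²), x ↦ Tr(x·xᵀ), and x ↦ Tr(x)² are linearly independent over ℂ. -/
open Matrix

/-- The three functions `x ↦ Tr(x²)`, `x ↦ Tr(x·xᵀ)`, `x ↦ Tr(x)²` on 2×2 complex
matrices are linearly independent over ℂ. -/
theorem linearIndependent_degree_two_invariants :
    LinearIndependent ℂ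
      (![fun x => (x * x).trace,
         fun x => (x * xᵀ).trace,
         fun x => x.trace ^ 2] : Fin 3 → (Matrix (Fin 2) (Fin 2) ℂ → ℂ)) := by
  rw [Fintype.linearIndependent_iff]
  intro g hg
  have h1 := congrFun hg !![0, 1; 0, 0]
  have h2 := congrFun hg !![1, 0; 0, -1]
  have h3 := congrFun hg !![1, 0; 0, 0]
  simp [Fin.sum_univ_three, Matrix.trace_fin_two, Matrix.mul_apply, Fin.sum_univ_two] at h1 h2 h3
  have h0 : g 0 = 0 := by linear_combination h2 / 2 - h1
  have h4 : g 2 = 0 := by linear_combination h3 - h1 - h0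
  intro i
  fin_cases i
  · exact h0
  · exact h1
  · exact h4
end

section
/- The five functions from 3×3 complex matrices to ℂ given by x ↦ Tr(x³), x ↦ Tr(x²·xᵀ), x ↦ Tr(x²)·Tr(x), x ↦ Tr(x·xᵀ)·Tr(x), and x ↦ Tr(x)³ are linearly independent over ℂ. -/
open Matrix

/-- The five functions `x ↦ Tr(x³)`, `x ↦ Tr(x²·xᵀ)`, `x ↦ Tr(x²)·Tr(x)`,
`x ↦ Tr(x·xᵀ)·Tr(x)`, `x ↦ Tr(x)³` on 3×3 complex matrices are linearly
independent over ℂ. -/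
theorem linearIndependent_degree_three_invariants :
    LinearIndependent ℂ
      (![fun x => (x * x * x).trace,
         fun x => (x * x * xᵀ).trace,
         fun x => (x * x).trace * x.trace,
         fun x => (x * xᵀ).trace * x.trace,
         fun x => x.trace ^ 3] : Fin 5 → (Matrix (Fin 3) (Fin 3) ℂ → ℂ)) := by
  rw [Fintype.linearIndependent_iff]
  intro g hg
  have h1 := congrFun hg !![0, 1, 0; 0, 0, 1; 1, 0, 0]
  have h2 := congrFun hg !![0, 1, 1; 0, 0, 1; 0, 0, 0]
  have h3 := congrFun hg !![1, 0, 0; 0, 0, 1; 0, 0, 0]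
  have h4 := congrFun hg !![1, 0, 0; 0, 0, 0; 0, 0, 0]
  have h5 := congrFun hg !![1, 0, 0; 0, 1, 0; 0, 0, 0]
  simp [Fin.sum_univ_succ, Matrix.trace, Matrix.mul_apply] at h1 h2 h3 h4 h5
  norm_num at h1 h2 h3 h4 h5
  have e0 : g 0 = 0 := by grind
  have e1 : g 1 = 0 := by grind
  have e3 : g 3 = 0 := by grind
  have e4 : g 4 = 0 := by grind
  have e2 : g 2 = 0 := by grind
  intro i
  fin_cases i <;> assumption
end
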